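/- Let p_1(x) = x + 1, p_2(x) = 1 − x, and p_3(x) = ((3 + 2√2)/2)·(1 − x²). Then sup_{x∈[-1,1]} |p_i(x) − p_j(x)| ≤ 2 for all i, j ∈ {1,2,3}, yet for every polynomial q of degree at most 2 there exists i ∈ {1,2,3} with sup_{x∈[-1,1]} |q(x) − p_i(x)| > 1.09. -/

import Mathlib

open Polynomial

/-- The sup-norm of `f` over `[-1, 1]`. -/
noncomputable def supNorm (f : ℝ → ℝ) : ℝ := ⨆ x : Set.Icc (-1 : ℝ) 1, |f x|

/-!
Write `p₁ x = 1 + x`, `p₂ x = 1 - x`, `p₃ x = c * (1 - x ^ 2)`. The inequality `p₃ ≤ p₁ + 2` says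
that `c * x ^ 2 + x + 3 - c` is nonnegative, and `c = (3 + 2 * √2) / 2` is the largest `c` for which
its discriminant `1 - 4 * c * (3 - c)` is nonpositive.

If `q` is within `M` of all three, then `q 1` and `q (-1)` are at least `2 - M` because of `p₁` and
`p₂`, and `q 0` is at least `c - M` because of `p₃`, whereas `q t` and `q (-t)` are at most
`1 - t + M` because of `p₂` and `p₁`. The even part of a quadratic is affine in `x ^ 2`, so its
value at `t` interpolates those at `0` and `1`; comparing bounds from both sides forces `M` to be
large. The choice `t = 1 / 2`, close to the optimal `t = 1 / (2 * (c - 2)) ≈ 0.547`, gives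
`M ≥ 3 * c / 8 > 1.09`.
-/

/-- The functions `p₁, p₂, p₃`, indexed from `0`, with the coefficient `(3 + 2 * √2) / 2` of `p₃`
replaced by a parameter `c`. -/
def threeQuadratics (c : ℝ) : Fin 3 → ℝ → ℝ :=
  ![fun x => x + 1, fun x => 1 - x, fun x => c * (1 - x ^ 2)]

section SupNorm

variable {f : ℝ → ℝ} {x M : ℝ}

lemma supNorm_le (h : ∀ x ∈ Set.Icc (-1 : ℝ) 1, |f x| ≤ M) : supNorm f ≤ M := by
  have : Nonempty (Set.Icc (-1 : ℝ) 1) := ⟨⟨0, by norm_num⟩⟩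
  exact ciSup_le fun x => h x x.2

lemma abs_le_supNorm (hf : ContinuousOn f (Set.Icc (-1) 1)) (hx : x ∈ Set.Icc (-1 : ℝ) 1) :
    |f x| ≤ supNorm f :=
  le_ciSup (f := fun y : Set.Icc (-1 : ℝ) 1 => |f y|)
    (isCompact_range hf.domRestrict.abs).bddAbove ⟨x, hx⟩

end SupNorm

section Discriminant

variable {K : Type*} [CommRing K] [LinearOrder K] [IsStrictOrderedRing K] {c : K}

lemma pos_of_one_le_four_mul_mul_three_sub (hc : 1 ≤ 4 * c * (3 - c)) : 0 < c := by
  by_contra! hc_nonpos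
  linarith [mul_nonpos_of_nonpos_of_nonneg hc_nonpos (by linarith : 0 ≤ 3 - c)]

lemma mul_one_sub_sq_le_add_three (hc : 1 ≤ 4 * c * (3 - c)) (x : K) :
    c * (1 - x ^ 2) ≤ x + 3 := by
  have complete_square : 4 * c * (x + 3 - c * (1 - x ^ 2)) =
      (2 * c * x + 1) ^ 2 + (4 * c * (3 - c) - 1) := by ring
  have nonneg : 0 ≤ 4 * c * (x + 3 - c * (1 - x ^ 2)) := by
    rw [complete_square]
    exact add_nonneg (sq_nonneg _) (sub_nonneg.mpr hc)
  have c_pos := pos_of_one_le_four_mul_mul_three_sub hc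
  exact sub_nonneg.mp (nonneg_of_mul_nonneg_right nonneg (by positivity))

end Discriminant

section PairwiseDistances

variable {c x : ℝ}

lemma threeQuadratics_nonneg (hc : 0 ≤ c) (hx : x ∈ Set.Icc (-1 : ℝ) 1) (i : Fin 3) :
    0 ≤ threeQuadratics c i x := by
  have x_sq_le : x ^ 2 ≤ 1 := sq_le_one_iff_abs_le_one x |>.mpr (abs_le.mpr hx)
  match i with
  | 0 => exact neg_le_iff_add_nonneg.mp hx.1
  | 1 => exact sub_nonneg.mpr hx.2
  | 2 => exact mul_nonneg hc (sub_nonneg.mpr x_sq_le)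

lemma threeQuadratics_le_add_two (hc : 1 ≤ 4 * c * (3 - c)) (hx : x ∈ Set.Icc (-1 : ℝ) 1)
    (i j : Fin 3) : threeQuadratics c i x ≤ threeQuadratics c j x + 2 := by
  have nonneg := threeQuadratics_nonneg (pos_of_one_le_four_mul_mul_three_sub hc).le hx j
  match i, j with
  | 0, j => change x + 1 ≤ _; linarith [hx.2]
  | 1, j => change 1 - x ≤ _; linarith [hx.1]
  | 2, 0 => change c * (1 - x ^ 2) ≤ x + 1 + 2; linarith [mul_one_sub_sq_le_add_three hc x]
  | 2, 1 =>
    have reflected := mul_one_sub_sq_le_add_three hc (-x)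
    rw [neg_sq] at reflected
    change c * (1 - x ^ 2) ≤ 1 - x + 2
    linarith
  | 2, 2 => exact le_add_of_nonneg_right zero_le_two

lemma supNorm_threeQuadratics_sub_le_two (hc : 1 ≤ 4 * c * (3 - c)) (i j : Fin 3) :
    supNorm (fun x => threeQuadratics c i x - threeQuadratics c j x) ≤ 2 :=
  supNorm_le fun _ hx => abs_sub_le_iff.mpr
    ⟨sub_le_iff_le_add'.mpr (threeQuadratics_le_add_two hc hx i j),
      sub_le_iff_le_add'.mpr (threeQuadratics_le_add_two hc hx j i)⟩

end PairwiseDistances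

section CommonApproximation

lemma continuous_threeQuadratics (c : ℝ) (i : Fin 3) : Continuous (threeQuadratics c i) := by
  match i with
  | 0 => exact continuous_id.add continuous_const
  | 1 => exact continuous_const.sub continuous_id
  | 2 => exact continuous_const.mul (continuous_const.sub (continuous_pow 2))

lemma eval_add_eval_neg_of_natDegree_le_two {R : Type*} [CommRing R] {q : R[X]}
    (hq : q.natDegree ≤ 2) (t : R) :
    q.eval t + q.eval (-t) =
      t ^ 2 * (q.eval 1 + q.eval (-1)) + 2 * (1 - t ^ 2) * q.eval 0 := by
  simp only [eval_eq_sum_range' (Nat.lt_succ_of_le hq), Finset.sum_range_succ,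
    Finset.sum_range_zero]
  ring

lemma exists_le_supNorm_sub_threeQuadratics {q : ℝ[X]} (hq : q.natDegree ≤ 2) (c : ℝ) {t : ℝ}
    (ht : t ∈ Set.Icc (-1 : ℝ) 1) :
    ∃ i, ((1 - t ^ 2) * c + 2 * t ^ 2 + t - 1) / 2 ≤
      supNorm (fun x => q.eval x - threeQuadratics c i x) := by
  by_contra! h
  set M := ((1 - t ^ 2) * c + 2 * t ^ 2 + t - 1) / 2 with hM
  have close (i : Fin 3) {x : ℝ} (hx : x ∈ Set.Icc (-1 : ℝ) 1) :
      q.eval x - threeQuadratics c i x < M ∧ threeQuadratics c i x - q.eval x < M :=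
    abs_sub_lt_iff.mp <| (abs_le_supNorm
      (q.continuous.sub (continuous_threeQuadratics c i)).continuousOn hx).trans_lt (h i)
  have at_one : 1 + 1 - q.eval 1 < M := (close 0 (by norm_num)).2
  have at_neg_one : 1 - -1 - q.eval (-1) < M := (close 1 (by norm_num)).2
  have at_zero : c * (1 - 0 ^ 2) - q.eval 0 < M := (close 2 (by norm_num)).2
  have at_t : q.eval t - (1 - t) < M := (close 1 ht).1
  have at_neg_t : q.eval (-t) - (-t + 1) < M :=
    (close 0 ⟨neg_le_neg ht.2, neg_le.mp ht.1⟩).1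
  have t_sq_le : t ^ 2 ≤ 1 := sq_le_one_iff_abs_le_one t |>.mpr (abs_le.mpr ht)
  have ends : t ^ 2 * (4 - 2 * M) ≤ t ^ 2 * (q.eval 1 + q.eval (-1)) :=
    mul_le_mul_of_nonneg_left (by linarith) (sq_nonneg t)
  have centre : 2 * (1 - t ^ 2) * (c - M) ≤ 2 * (1 - t ^ 2) * q.eval 0 :=
    mul_le_mul_of_nonneg_left (by linarith) (by linarith)
  linarith [eval_add_eval_neg_of_natDegree_le_two hq t]

end CommonApproximation

/-- Three quadratics within `ℓ∞` distance 2 of each other on `[-1,1]`, yet no degree-2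
polynomial is within `ℓ∞` distance `1.09` of all three. -/
theorem three_quadratics_lower_bound :
    (∀ i j : Fin 3,
      supNorm (fun x =>
          (![fun x : ℝ => x + 1, fun x => 1 - x,
              fun x => (3 + 2 * Real.sqrt 2) / 2 * (1 - x ^ 2)] i) x -
          (![fun x : ℝ => x + 1, fun x => 1 - x,
              fun x => (3 + 2 * Real.sqrt 2) / 2 * (1 - x ^ 2)] j) x) ≤ 2) ∧
    ∀ q : Polynomial ℝ, q.natDegree ≤ 2 →
      ∃ i : Fin 3,
        1.09 < supNorm (fun x => q.eval x -
          (![fun x : ℝ => x + 1, fun x => 1 - x,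
              fun x => (3 + 2 * Real.sqrt 2) / 2 * (1 - x ^ 2)] i) x) := by
  have sq_sqrt_two : √2 ^ 2 = (2 : ℝ) := Real.sq_sqrt zero_le_two
  have sqrt_two_gt : 1.41 < √2 := Real.lt_sqrt_of_sq_lt (by norm_num)
  have discriminant_eq : 4 * ((3 + 2 * √2) / 2) * (3 - (3 + 2 * √2) / 2) = 1 := by
    linear_combination -4 * sq_sqrt_two
  refine ⟨supNorm_threeQuadratics_sub_le_two discriminant_eq.ge, fun q hq => ?_⟩
  obtain ⟨i, hi⟩ := exists_le_supNorm_sub_threeQuadratics hq ((3 + 2 * √2) / 2)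
    (t := 1 / 2) (by norm_num)
  exact ⟨i, lt_of_lt_of_le (by linarith) hi⟩
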